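/- For every real β ≥ 0, every integer n ≥ 0, and every z ∈ ℂ, the series Σ_{m=n}^{∞} (n!/Γ(β+m+1)) · |Z^{(β)}_{m,n}(z, conj(z))|² converges, and its sum equals E_n^{(β)}(|z|²), where for x ≥ 0, E_n^{(β)}(x) := ((1+β)_n/(n!·Γ(β+1))) · Σ_{k=0}^{n} Σ_{k'=0}^{n} [(−n)_k (−n)_{k'} / (k!·k'!·(1+β)_k·(1+β)_{k'})] · x^{k+k'} · Σ_{j=0}^{∞} [(β+n+1)_j / ((β+k+1)_j (β+k'+1)_j)] · x^{j} (the inner series converging for all x). -/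

import Mathlib

open Finset

/-- Pochhammer symbol `(a)_j = a (a+1) ⋯ (a+j-1)`. -/
noncomputable def poch (a : ℝ) (j : ℕ) : ℝ := ∏ i ∈ Finset.range j, (a + i)

/-- The generalized 2D Laguerre polynomial `Z^{(β)}_{m,n}(z,w)` (for `m ≥ n`). -/
noncomputable def Zc (β : ℝ) (m n : ℕ) (z w : ℂ) : ℂ :=
  ∑ k ∈ Finset.range (n + 1),
    (((-1 : ℝ) ^ (n - k) * poch (β + 1) m /
        (k.factorial * (n - k).factorial * poch (β + 1) (m - k)) : ℝ) : ℂ) *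
      z ^ (m - k) * w ^ (n - k)

/-- The sum `E_n^{(β)}(x)` of the series `Σ_{m≥n} |Z^{(β)}_{m,n}|²/C(m,n,β)`, expressed via
the terminating double sum with inner `₂F₂` series. -/
noncomputable def Efn (β : ℝ) (n : ℕ) (x : ℝ) : ℝ :=
  (poch (1 + β) n / (n.factorial * Real.Gamma (β + 1))) *
    ∑ k ∈ Finset.range (n + 1), ∑ k' ∈ Finset.range (n + 1),
      poch (-(n : ℝ)) k * poch (-(n : ℝ)) k' /
          (k.factorial * k'.factorial * poch (1 + β) k * poch (1 + β) k') *
        x ^ (k + k') *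
        ∑' j : ℕ, poch (β + n + 1) j / (poch (β + k + 1) j * poch (β + k' + 1) j) * x ^ j

/-!
With `x = |z|²`, the polynomial `Z^{(β)}_{n+j,n}(z, z̄)` is `z^j L_n^{(β+j)}(x)`, a power of `z`
times a generalized Laguerre polynomial. Rewriting the shifted symbol `(β+j+1)_k` through
`(β+1)_j (β+j+1)_k = (β+1)_k (β+k+1)_j` turns the `j`-th term of the series into a finite double sum
over `k, k'` of `j`-th terms of the `₂F₂` series, which are summed over `j` one pair at a time.
-/

open Filter Polynomial Topology

section Pochhammer

variable {a : ℝ}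

lemma poch_zero (a : ℝ) : poch a 0 = 1 := by simp [poch]

lemma poch_succ (a : ℝ) (j : ℕ) : poch a (j + 1) = poch a j * (a + j) :=
  prod_range_succ _ _

lemma poch_add (a : ℝ) (k j : ℕ) : poch a (k + j) = poch a k * poch (a + k) j := by
  simp only [poch, prod_range_add, Nat.cast_add, add_assoc]

lemma poch_ne_zero (ha : ∀ m : ℕ, a ≠ -m) (j : ℕ) : poch a j ≠ 0 :=
  prod_ne_zero_iff.mpr fun i _ ↦ mt eq_neg_of_add_eq_zero_left (ha i)

lemma poch_add_natCast_ne_zero (ha : ∀ m : ℕ, a ≠ -m) (k j : ℕ) : poch (a + k) j ≠ 0 :=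
  right_ne_zero_of_mul (poch_add a k j ▸ poch_ne_zero ha (k + j))

lemma poch_neg_natCast (n k : ℕ) : poch (-n) k = (-1) ^ k * n.descFactorial k := by
  rw [← descPochhammer_eval_eq_descFactorial, descPochhammer_eval_eq_prod_range]
  simpa [poch, neg_add_eq_sub] using prod_neg (s := range k) fun i : ℕ ↦ (n - i : ℝ)

lemma poch_neg_natCast_eq_div {n k : ℕ} (hk : k ≤ n) :
    poch (-n) k = (-1) ^ k * (n.factorial / (n - k).factorial) := by
  rw [poch_neg_natCast, ← Nat.factorial_mul_descFactorial hk, Nat.cast_mul,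
    mul_div_cancel_left₀ _ (by positivity)]

/- Both sides equal `(a)_{n+j}`. -/
lemma poch_mul_poch_mul_poch (a : ℝ) {n k : ℕ} (hk : k ≤ n) (j : ℕ) :
    poch a k * poch (a + k) j * poch (a + (k + j)) (n - k) = poch a n * poch (a + n) j := by
  rw [← poch_add, ← Nat.cast_add, ← poch_add, ← poch_add]
  congr 1
  lia

lemma Gamma_add_natCast (ha : ∀ m : ℕ, a ≠ -m) (m : ℕ) :
    Real.Gamma (a + m) = Real.Gamma a * poch a m := by
  induction m with
  | zero => simp [poch_zero]
  | succ m ih =>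
    have ham : a + m ≠ 0 := mt eq_neg_of_add_eq_zero_left (ha m)
    rw [Nat.cast_succ, ← add_assoc, Real.Gamma_add_one ham, ih, poch_succ]
    ring

lemma summable_poch_div_poch_mul_poch (a b c x : ℝ) :
    Summable fun j : ℕ ↦ poch a j / (poch b j * poch c j) * x ^ j := by
  have ratio_tendsto : Tendsto (fun j : ℕ ↦ (a + j) / (b + j) * (x / (c + j))) atTop (𝓝 0) := by
    have h₁ : Tendsto (fun j : ℕ ↦ (a + j) / (b + j)) atTop (𝓝 1) := by
      simpa using tendsto_add_mul_div_add_mul_atTop_nhds a b 1 one_ne_zero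
    have h₂ : Tendsto (fun j : ℕ ↦ x / (c + j)) atTop (𝓝 0) :=
      (tendsto_atTop_add_const_left _ c tendsto_natCast_atTop_atTop).const_div_atTop x
    simpa using h₁.mul h₂
  refine summable_of_ratio_norm_eventually_le one_half_lt_one ?_
  filter_upwards [ratio_tendsto.norm.eventually_le_const
    (show ‖(0 : ℝ)‖ < 1 / 2 by norm_num)] with j hj
  calc ‖poch a (j + 1) / (poch b (j + 1) * poch c (j + 1)) * x ^ (j + 1)‖
      = ‖(a + j) / (b + j) * (x / (c + j))‖ * ‖poch a j / (poch b j * poch c j) * x ^ j‖ := by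
        rw [← norm_mul]
        simp only [poch_succ, pow_succ, div_eq_mul_inv, mul_inv]
        ring_nf
    _ ≤ 1 / 2 * ‖poch a j / (poch b j * poch c j) * x ^ j‖ := by gcongr

end Pochhammer

/-- The generalized Laguerre polynomial `L_n^{(α)} = ∑ (-1)^k binom(n + α, n - k) X^k / k!`, the
radial part of `Z^{(β)}_{m,n}`. The binomial coefficient is written as
`(α + k + 1)_{n - k} / (n - k)!`, which makes sense for every real `α`. -/
noncomputable def laguerre (α : ℝ) (n : ℕ) : ℝ[X] :=
  ∑ k ∈ range (n + 1),
    C ((-1) ^ k * poch (α + k + 1) (n - k) / (k.factorial * (n - k).factorial)) * X ^ k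

section Laguerre

variable {β : ℝ}

lemma Zc_eq_pow_mul_aeval_laguerre (hβ : ∀ m : ℕ, β + 1 ≠ -m) (n j : ℕ) (z w : ℂ) :
    Zc β (n + j) n z w = z ^ j * aeval (z * w) (laguerre (β + j) n) := by
  rw [Zc, ← sum_range_reflect, laguerre, map_sum, mul_sum]
  refine sum_congr rfl fun k hk ↦ ?_
  have hkn : k ≤ n := mem_range_succ_iff.mp hk
  have poch_split : poch (β + 1) (n + j) =
      poch (β + 1) (k + j) * poch (β + j + k + 1) (n - k) := by
    rw [show n + j = k + j + (n - k) by lia, poch_add]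
    push_cast
    ring_nf
  have coeff_eq : (-1) ^ k * poch (β + 1) (n + j) /
        ((n - k).factorial * k.factorial * poch (β + 1) (k + j)) =
      (-1) ^ k * poch (β + j + k + 1) (n - k) / (k.factorial * (n - k).factorial) := by
    have := poch_ne_zero hβ (k + j)
    rw [poch_split]
    field_simp
  rw [Nat.add_sub_cancel, Nat.sub_sub_self hkn, show n + j - (n - k) = k + j by lia, coeff_eq]
  simp only [map_mul, aeval_C, map_pow, aeval_X, Complex.coe_algebraMap]
  ring

lemma norm_Zc_conj_sq (hβ : ∀ m : ℕ, β + 1 ≠ -m) (n j : ℕ) (z : ℂ) :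
    ‖Zc β (n + j) n z (starRingEnd ℂ z)‖ ^ 2 =
      Complex.normSq z ^ j * (laguerre (β + j) n).eval (Complex.normSq z) ^ 2 := by
  rw [Zc_eq_pow_mul_aeval_laguerre hβ, Complex.mul_conj, ← RCLike.ofReal_eq_complex_ofReal,
    aeval_ofReal, norm_mul, mul_pow, norm_pow, pow_right_comm, ← Complex.normSq_eq_norm_sq,
    RCLike.norm_ofReal, sq_abs]

/- Compared with the definition of `laguerre`, the dependence on `j` is confined to Pochhammer
symbols of length `j`, the shape of the terms of a hypergeometric series. -/
lemma eval_laguerre_add_natCast (hβ : ∀ m : ℕ, β + 1 ≠ -m) (n j : ℕ) (x : ℝ) :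
    (laguerre (β + j) n).eval x =
      poch (1 + β) n * poch (β + n + 1) j / n.factorial *
        ∑ k ∈ range (n + 1),
          poch (-n) k / (k.factorial * poch (1 + β) k * poch (β + k + 1) j) * x ^ k := by
  rw [laguerre, eval_finsetSum, mul_sum]
  refine sum_congr rfl fun k hk ↦ ?_
  have hkn : k ≤ n := mem_range_succ_iff.mp hk
  have h₁ := poch_ne_zero hβ k
  have h₂ := poch_add_natCast_ne_zero hβ k j
  have poch_split := poch_mul_poch_mul_poch (β + 1) hkn j
  rw [eval_C_mul, eval_X_pow, poch_neg_natCast_eq_div hkn, add_comm 1 β, add_right_comm β n 1,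
    add_right_comm β k 1, ← poch_split, show β + j + k + 1 = β + 1 + (k + j) by ring]
  field_simp

lemma factorial_div_Gamma_mul_laguerre_sq (hβ : ∀ m : ℕ, β + 1 ≠ -m) (n j : ℕ) (x : ℝ) :
    n.factorial / Real.Gamma (β + (n + j) + 1) * (x ^ j * (laguerre (β + j) n).eval x ^ 2) =
      poch (1 + β) n / (n.factorial * Real.Gamma (β + 1)) *
        ∑ k ∈ range (n + 1), ∑ k' ∈ range (n + 1),
          poch (-n) k * poch (-n) k' /
              (k.factorial * k'.factorial * poch (1 + β) k * poch (1 + β) k') *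
            x ^ (k + k') *
            (poch (β + n + 1) j / (poch (β + k + 1) j * poch (β + k' + 1) j) * x ^ j) := by
  have hGamma : Real.Gamma (β + (n + j) + 1) =
      Real.Gamma (β + 1) * (poch (1 + β) n * poch (β + n + 1) j) := by
    rw [add_comm 1 β, add_right_comm β n, ← poch_add, ← Gamma_add_natCast hβ]
    push_cast
    ring_nf
  have h₁ : poch (1 + β) n ≠ 0 := add_comm β 1 ▸ poch_ne_zero hβ n
  have h₂ : poch (β + n + 1) j ≠ 0 := add_right_comm β 1 n ▸ poch_add_natCast_ne_zero hβ n j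
  let t (k : ℕ) : ℝ := poch (-n) k / (k.factorial * poch (1 + β) k * poch (β + k + 1) j) * x ^ k
  calc n.factorial / Real.Gamma (β + (n + j) + 1) * (x ^ j * (laguerre (β + j) n).eval x ^ 2)
      = poch (1 + β) n / (n.factorial * Real.Gamma (β + 1)) *
          ((∑ k ∈ range (n + 1), t k) * (∑ k' ∈ range (n + 1), t k') *
            (poch (β + n + 1) j * x ^ j)) := by
        rw [eval_laguerre_add_natCast hβ, hGamma]
        simp only [t]
        field_simp
    _ = _ := by
        rw [sum_mul_sum]
        simp only [sum_mul, t]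
        congr! 3 with k _ k'
        simp only [div_eq_mul_inv, mul_inv, pow_add]
        ring

lemma hasSum_factorial_div_Gamma_mul_laguerre_sq (hβ : ∀ m : ℕ, β + 1 ≠ -m) (n : ℕ) (x : ℝ) :
    HasSum (fun j : ℕ ↦ n.factorial / Real.Gamma (β + (n + j) + 1) *
      (x ^ j * (laguerre (β + j) n).eval x ^ 2)) (Efn β n x) := by
  simp only [factorial_div_Gamma_mul_laguerre_sq hβ]
  exact .mul_left _ <| hasSum_sum fun k _ ↦ hasSum_sum fun k' _ ↦
    (summable_poch_div_poch_mul_poch _ _ _ x).hasSum.mul_left _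

end Laguerre

theorem laguerre2D_summation_general (β : ℝ) (hβ : ∀ m : ℕ, β + 1 ≠ -m) (n : ℕ) (z : ℂ) :
    (∀ k k' : ℕ, Summable (fun j : ℕ =>
      poch (β + n + 1) j / (poch (β + k + 1) j * poch (β + k' + 1) j) *
        Complex.normSq z ^ j)) ∧
    HasSum
      (fun j : ℕ =>
        (n.factorial : ℝ) / Real.Gamma (β + (n + j) + 1) *
          ‖Zc β (n + j) n z (starRingEnd ℂ z)‖ ^ 2)
      (Efn β n (Complex.normSq z)) := by
  refine ⟨fun k k' ↦ summable_poch_div_poch_mul_poch _ _ _ _, ?_⟩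
  simp only [norm_Zc_conj_sq hβ]
  exact hasSum_factorial_div_Gamma_mul_laguerre_sq hβ n (Complex.normSq z)

/-- Summation formula: `Σ_{m=n}^∞ (n!/Γ(β+m+1)) |Z^{(β)}_{m,n}(z, z̄)|² = E_n^{(β)}(|z|²)`,
with the inner hypergeometric series converging for all arguments. -/
theorem laguerre2D_summation (β : ℝ) (hβ : 0 ≤ β) (n : ℕ) (z : ℂ) :
    (∀ k k' : ℕ, Summable (fun j : ℕ =>
      poch (β + n + 1) j / (poch (β + k + 1) j * poch (β + k' + 1) j) *
        Complex.normSq z ^ j)) ∧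
    HasSum
      (fun j : ℕ =>
        (n.factorial : ℝ) / Real.Gamma (β + (n + j) + 1) *
          ‖Zc β (n + j) n z (starRingEnd ℂ z)‖ ^ 2)
      (Efn β n (Complex.normSq z)) := by
  exact laguerre2D_summation_general β
    (fun m ↦ ne_of_gt (by linarith [m.cast_nonneg (α := ℝ)])) n z
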